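/- Fillmore's Theorem: Let A be a nonscalar n×n matrix over a field F and let γ₁, ..., γₙ ∈ F satisfy γ₁ + ⋯ + γₙ = tr(A). Then there exists a matrix B similar to A over F whose diagonal entries are exactly (γ₁, ..., γₙ). -/

import Mathlib

/-!
A nonscalar `A` has a vector `v` with `v` and `A v` linearly independent. In a basis whose `j`-th
vector is `v` and in which all coordinates of `A v` are `1`, the `j`-th column of the matrix is
constantly `1`. Adding multiples of the other rows to row `j`, and undoing this on the columns,
subtracts an arbitrary amount from each diagonal entry outside position `j`, independently of the
others; the entry at `j` is then determined by the trace. So two changes of basis prescribe the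
whole diagonal at once, without induction on the size.
-/

open Matrix

theorem exists_linearEquiv_apply_eq {κ K V : Type*} [Finite κ] [DivisionRing K] [AddCommGroup V]
    [Module K V] {v w : κ → V} (hv : LinearIndependent K v) (hw : LinearIndependent K w) :
    ∃ g : V ≃ₗ[K] V, ∀ i, g (v i) = w i := by
  have : FiniteDimensional K (Submodule.span K (Set.range v)) :=
    FiniteDimensional.span_of_finite K (Set.finite_range v)
  obtain ⟨g, hg⟩ := Submodule.exists_linearEquiv_restrict_eq
    (hv.linearCombinationEquiv.symm ≪≫ₗ hw.linearCombinationEquiv)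
  refine ⟨g, fun i => ?_⟩
  simpa using (hg (hv.linearCombinationEquiv (Finsupp.single i 1))).symm

theorem linearIndependent_single_one {ι R : Type*} [DecidableEq ι] [Nontrivial ι] [Ring R]
    (j : ι) : LinearIndependent R ![Pi.single j 1, (1 : ι → R)] := by
  obtain ⟨i, hij⟩ := exists_ne j
  refine LinearIndependent.pair_iff.mpr fun s t h => ?_
  have ht : t = 0 := by simpa [hij] using congrFun h i
  have hst : s + t = 0 := by simpa using congrFun h j
  exact ⟨by simpa [ht] using hst, ht⟩

theorem nontrivial_of_forall_ne_smul_one {ι R : Type*} [DecidableEq ι] [Semiring R]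
    {A : Matrix ι ι R} (hA : ∀ c : R, A ≠ c • (1 : Matrix ι ι R)) : Nontrivial ι := by
  by_contra! h
  cases isEmpty_or_nonempty ι with
  | inl _ => exact hA 0 (Subsingleton.elim _ _)
  | inr hι =>
    obtain ⟨k⟩ := hι
    refine hA (A k k) (Matrix.ext fun i j => ?_)
    obtain rfl := Subsingleton.elim i k
    obtain rfl := Subsingleton.elim i j
    simp

theorem one_add_mul_mul_one_sub_vecMulVec_single_apply_self {ι R : Type*} [Fintype ι]
    [DecidableEq ι] [Ring R] (A : Matrix ι ι R) {i j : ι} (hij : i ≠ j) (x : ι → R) :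
    ((1 + vecMulVec (Pi.single j 1) x) * A * (1 - vecMulVec (Pi.single j 1) x)) i i =
      A i i - A i j * x i := by
  simp [add_mul, mul_sub, vecMulVec_mul, mul_vecMulVec, vecMulVec_apply, hij]

theorem eq_of_sum_eq_of_forall_ne {ι M : Type*} [Fintype ι] [AddCommMonoid M]
    [IsRightCancelAdd M] {f g : ι → M} (j : ι) (hsum : ∑ i, f i = ∑ i, g i)
    (hne : ∀ i ≠ j, f i = g i) : f = g := by
  classical
  funext i
  by_cases hij : i = j
  · subst hij
    have hrest : ∑ k ∈ Finset.univ.erase i, f k = ∑ k ∈ Finset.univ.erase i, g k :=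
      Finset.sum_congr rfl fun k hk => hne k (Finset.ne_of_mem_erase hk)
    rw [← Finset.add_sum_erase _ f (Finset.mem_univ i),
      ← Finset.add_sum_erase _ g (Finset.mem_univ i), hrest] at hsum
    exact add_right_cancel hsum
  · exact hne i hij

section CommRing

variable {ι R : Type*} [Fintype ι] [DecidableEq ι] [CommRing R]

theorem exists_linearIndependent_mulVec [IsDomain R] {A : Matrix ι ι R}
    (hA : ∀ c : R, A ≠ c • (1 : Matrix ι ι R)) :
    ∃ v, LinearIndependent R ![v, A *ᵥ v] := by
  by_contra! h
  obtain ⟨c, hc⟩ := (toLin' A).exists_eq_smul_id_of_forall_notLinearIndependent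
    (by simpa only [toLin'_apply] using h)
  apply hA c
  apply toLin'.injective
  rw [hc, map_smul, toLin'_one, Module.End.one_eq_id]

theorem exists_units_conj_diag_eq_of_dvd {A : Matrix ι ι R} {γ : ι → R} {j : ι}
    (hdvd : ∀ i ≠ j, A i j ∣ A i i - γ i) (hγ : ∑ i, γ i = A.trace) :
    ∃ P : (Matrix ι ι R)ˣ, (P.val * A * P⁻¹.val).diag = γ := by
  choose! x hx using hdvd
  let N := vecMulVec (Pi.single j 1) (Function.update x j 0)
  have hN : N * N = 0 := by simp [N, vecMulVec_mul_vecMulVec]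
  let P : (Matrix ι ι R)ˣ := ⟨1 + N, 1 - N, by simp [add_mul, mul_sub, hN],
    by simp [sub_mul, mul_add, hN]⟩
  refine ⟨P, eq_of_sum_eq_of_forall_ne j ((trace_units_conj P A).trans hγ.symm) fun i hij => ?_⟩
  calc (P.val * A * P⁻¹.val) i i = A i i - A i j * Function.update x j 0 i :=
        one_add_mul_mul_one_sub_vecMulVec_single_apply_self A hij _
    _ = γ i := by rw [Function.update_of_ne hij, ← hx i hij, sub_sub_cancel]

end CommRing

section Field

variable {ι F : Type*} [Fintype ι] [DecidableEq ι] [Field F]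

theorem exists_units_mulVec_eq {κ : Type*} [Finite κ] {v w : κ → ι → F}
    (hv : LinearIndependent F v) (hw : LinearIndependent F w) :
    ∃ P : (Matrix ι ι F)ˣ, ∀ k, P.val *ᵥ v k = w k := by
  obtain ⟨g, hg⟩ := exists_linearEquiv_apply_eq hv hw
  refine ⟨GeneralLinearGroup.toLin.symm (.ofLinearEquiv g), fun k => ?_⟩
  rw [← hg]
  exact LinearMap.toMatrix'_mulVec g.toLinearMap (v k)

theorem exists_units_conj_col_eq {A : Matrix ι ι F} (hA : ∀ c : F, A ≠ c • (1 : Matrix ι ι F))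
    {j : ι} {u : ι → F} (hu : LinearIndependent F ![Pi.single j 1, u]) :
    ∃ P : (Matrix ι ι F)ˣ, (P.val * A * P⁻¹.val).col j = u := by
  obtain ⟨v, hv⟩ := exists_linearIndependent_mulVec hA
  obtain ⟨P, hP⟩ := exists_units_mulVec_eq hv hu
  have hPv : P.val *ᵥ v = Pi.single j 1 := hP 0
  have hPAv : P.val *ᵥ (A *ᵥ v) = u := hP 1
  refine ⟨P, ?_⟩
  calc (P.val * A * P⁻¹.val).col j = (P.val * A * P⁻¹.val) *ᵥ (P.val *ᵥ v) := by
        rw [hPv, mulVec_single_one]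
    _ = P.val *ᵥ (A *ᵥ v) := by
        rw [mulVec_mulVec, Units.inv_mul_cancel_right, ← mulVec_mulVec]
    _ = u := hPAv

theorem stmt_3_general {A : Matrix ι ι F} (hA : ∀ c : F, A ≠ c • (1 : Matrix ι ι F))
    {γ : ι → F} (hγ : ∑ i, γ i = A.trace) :
    ∃ P : (Matrix ι ι F)ˣ, ∀ i, (P.val * A * P⁻¹.val) i i = γ i := by
  have : Nontrivial ι := nontrivial_of_forall_ne_smul_one hA
  obtain ⟨j⟩ : Nonempty ι := inferInstance
  obtain ⟨P, hP⟩ := exists_units_conj_col_eq hA (linearIndependent_single_one j)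
  have hcol : ∀ i, (P.val * A * P⁻¹.val) i j = 1 := congrFun hP
  obtain ⟨Q, hQ⟩ := exists_units_conj_diag_eq_of_dvd (A := P.val * A * P⁻¹.val) (γ := γ) (j := j)
    (fun i _ => by simp only [hcol, one_dvd]) (by rw [hγ, trace_units_conj])
  exact ⟨Q * P, fun i => by simpa [mul_assoc] using congrFun hQ i⟩

end Field

theorem stmt_3 {F : Type*} [Field F] {n : ℕ} (hn : 2 ≤ n)
    (A : Matrix (Fin n) (Fin n) F)
    (hA : ∀ c : F, A ≠ c • (1 : Matrix (Fin n) (Fin n) F))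
    (γ : Fin n → F) (hγ : ∑ i, γ i = A.trace) :
    ∃ P : (Matrix (Fin n) (Fin n) F)ˣ, ∀ i, (P.val * A * P⁻¹.val) i i = γ i :=
  stmt_3_general hA hγ
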